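/- Let f be C²-smooth on an open neighbourhood of S^{n-1} whose restriction to S^{n-1} is orthogonal to all linear functions. Then ∫ |∇f|² dσ_{n-1} ≤ (c_n/(n−1)) ∫ ‖f''‖²_HS dσ_{n-1} with c_n = 1 + (1 + 1/√(n−1))²; in particular, ∫ |∇f|² dσ_{n-1} ≤ (5/(n−1)) ∫ ‖f''‖²_HS dσ_{n-1}. Here ∇f and f'' are the Euclidean gradient and Hessian. -/

import Mathlib

open MeasureTheory Metric Filter
open scoped RealInnerProductSpace ENNReal NNReal

noncomputable section

namespace SecondOrderConc

/-- Euclidean space ℝⁿ. -/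
abbrev E (n : ℕ) : Type := EuclideanSpace ℝ (Fin n)

/-- The uniform (normalized rotation-invariant) probability measure `σ_{n-1}`
on the unit sphere `S^{n-1}`, viewed as a measure on the ambient space ℝⁿ. -/
def sphMeasure (n : ℕ) : Measure (E n) :=
  ((((volume : Measure (E n)).toSphere).map Subtype.val) Set.univ)⁻¹ •
    (((volume : Measure (E n)).toSphere).map Subtype.val)

variable {n : ℕ}

/-- Euclidean Hessian of `f` at `x`, as a continuous linear operator on ℝⁿ. -/
def hess (f : E n → ℝ) (x : E n) : E n →L[ℝ] E n :=
  fderiv ℝ (gradient f) x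

/-- Squared Hilbert–Schmidt norm of an operator on ℝⁿ. -/
def hsNormSq (A : E n →L[ℝ] E n) : ℝ :=
  ∑ i : Fin n, ‖A (EuclideanSpace.single i 1)‖ ^ 2

/-- Orthogonal projection of ℝⁿ onto `θ^⊥` (for a unit vector `θ`). -/
def projPerp (θ : E n) : E n →L[ℝ] E n :=
  ContinuousLinearMap.id ℝ (E n) - (innerSL ℝ θ).smulRight θ

/-- Spherical gradient `∇_S f(θ) = ∇f(θ) − ⟨∇f(θ),θ⟩θ`. -/
def sgrad (f : E n → ℝ) (θ : E n) : E n :=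
  gradient f θ - ⟪gradient f θ, θ⟫ • θ

/-- Spherical Hessian `f''_S(θ) = P_{θ^⊥} (f''(θ) − ⟨∇f(θ),θ⟩ I_n) P_{θ^⊥}`. -/
def sHess (f : E n → ℝ) (θ : E n) : E n →L[ℝ] E n :=
  (projPerp θ).comp
    ((hess f θ - ⟪gradient f θ, θ⟫ • ContinuousLinearMap.id ℝ (E n)).comp (projPerp θ))

/-- Spherical Laplacian `Δ_S f(θ) = Tr f''_S(θ)`. -/
def sLap (f : E n → ℝ) (θ : E n) : ℝ :=
  LinearMap.trace ℝ (E n) (sHess f θ).toLinearMap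

/-- Euclidean Laplacian `Δ f = Tr f''`. -/
def eLap (f : E n → ℝ) (x : E n) : ℝ :=
  LinearMap.trace ℝ (E n) (hess f x).toLinearMap

/-- 0-homogeneous extension to `ℝⁿ \ {0}` of (the restriction to the sphere of) `g`. -/
def ext0 (g : E n → ℝ) : E n → ℝ := fun x => g (‖x‖⁻¹ • x)


/-- The orthogonal group of ℝⁿ. -/
abbrev OG (n : ℕ) : Type := unitary (E n →L[ℝ] E n)

instance : ContinuousStar (E n →L[ℝ] E n) :=
  ⟨(ContinuousLinearMap.adjoint (𝕜 := ℝ) (E := E n) (F := E n)).continuous⟩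

instance : CompactSpace (OG n) := by
  refine isCompact_iff_compactSpace.mp ?_
  refine (ProperSpace.isCompact_closedBall (0 : E n →L[ℝ] E n) 1).of_isClosed_subset ?_ ?_
  · have : ((unitary (E n →L[ℝ] E n) : Submonoid _) : Set (E n →L[ℝ] E n))
      = {u | star u * u = 1} ∩ {u | u * star u = 1} := by
      ext u; simp [Unitary.mem_iff]
    rw [this]
    exact (isClosed_eq (by fun_prop) (by fun_prop)).inter (isClosed_eq (by fun_prop) (by fun_prop))
  · intro u hu
    rw [mem_closedBall_zero_iff]
    refine ContinuousLinearMap.opNorm_le_bound _ zero_le_one fun x => ?_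
    rw [one_mul]
    exact (Unitary.norm_map (⟨u, hu⟩ : OG n) x).le

/-- The Haar probability measure on the orthogonal group. -/
def orthHaar (n : ℕ) : Measure (OG n) := Measure.haarMeasure ⊤

instance : (orthHaar n).IsHaarMeasure := by unfold orthHaar; infer_instance

instance : IsProbabilityMeasure (orthHaar n) :=
  ⟨by simpa [orthHaar] using
    Measure.haarMeasure_self (K₀ := (⊤ : TopologicalSpace.PositiveCompacts (OG n)))⟩

instance : (orthHaar n).IsMulRightInvariant := by
  refine ⟨fun g => ?_⟩
  have : IsProbabilityMeasure ((orthHaar n).map (· * g)) :=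
    Measure.isProbabilityMeasure_map (measurable_mul_const g).aemeasurable
  exact Measure.isHaarMeasure_eq_of_isProbabilityMeasure _ _

@[fun_prop]
lemma continuous_orth_apply {X : Type*} [TopologicalSpace X] {u : X → OG n} {x : X → E n}
    (hu : Continuous u) (hx : Continuous x) :
    Continuous fun t => (u t : E n →L[ℝ] E n) (x t) :=
  (continuous_subtype_val.comp hu).clm_apply hx

lemma integrable_of_continuous {F : Type*} [NormedAddCommGroup F] {g : OG n → F}
    (hg : Continuous g) : Integrable g (orthHaar n) :=
  hg.integrable_of_hasCompactSupport (HasCompactSupport.of_compactSpace g)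

/-- An orthogonal map carrying one orthonormal basis to another. -/
lemma exists_orth_basis (b c : OrthonormalBasis (Fin n) ℝ (E n)) :
    ∃ V : OG n, ∀ i, (V : E n →L[ℝ] E n) (b i) = c i :=
  ⟨Unitary.linearIsometryEquiv.symm (b.equiv c (Equiv.refl _)), fun i => by simp⟩

lemma exists_basis_pair {e w : E n} (he : ‖e‖ = 1) (hw : ‖w‖ = 1) (hew : ⟪e, w⟫ = 0)
    {i j : Fin n} (hij : i ≠ j) :
    ∃ b : OrthonormalBasis (Fin n) ℝ (E n), b i = e ∧ b j = w := by
  classical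
  obtain ⟨b, hb⟩ := Orthonormal.exists_orthonormalBasis_extension_of_card_eq (𝕜 := ℝ) (E := E n)
    (ι := Fin n) (v := fun k => if k = i then e else w) (s := {i, j}) (by simp) (by
      rw [orthonormal_iff_ite]
      rintro ⟨k, hk⟩ ⟨l, hl⟩
      have hji := hij.symm
      have hwe : ⟪w, e⟫ = 0 := by rw [real_inner_comm]; exact hew
      rcases hk with rfl | rfl <;> rcases hl with rfl | rfl <;>
        simp [hji, hew, hwe, he, hw, Subtype.ext_iff, hij])
  exact ⟨b, by simpa using hb i (by simp), by simpa [hij.symm] using hb j (by simp)⟩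

lemma integral_orth_pair {F : Type*} [NormedAddCommGroup F] [NormedSpace ℝ F]
    (Φ : E n → E n → F) {e w e' w' : E n}
    (he : ‖e‖ = 1) (hw : ‖w‖ = 1) (hew : ⟪e, w⟫ = 0)
    (he' : ‖e'‖ = 1) (hw' : ‖w'‖ = 1) (hew' : ⟪e', w'⟫ = 0)
    (hn : 2 ≤ n) :
    ∫ u : OG n, Φ (u.1 e) (u.1 w) ∂orthHaar n
      = ∫ u : OG n, Φ (u.1 e') (u.1 w') ∂orthHaar n := by
  have hij : (⟨0, by omega⟩ : Fin n) ≠ ⟨1, by omega⟩ := by simp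
  obtain ⟨b, rfl, rfl⟩ := exists_basis_pair he hw hew hij
  obtain ⟨c, rfl, rfl⟩ := exists_basis_pair he' hw' hew' hij
  obtain ⟨V, hV⟩ := exists_orth_basis b c
  rw [← integral_mul_right_eq_self (fun u : OG n => Φ (u.1 (b _)) (u.1 (b _))) V]
  simp [hV]

lemma toSphere_map_apply (A : Set (E n)) (hA : MeasurableSet A) :
    ((volume : Measure (E n)).toSphere.map Subtype.val) A
      = n * volume (Set.image2 (· • ·) (Set.Ioo (0 : ℝ) 1) (A ∩ sphere (0 : E n) 1)) := by
  rw [Measure.map_apply measurable_subtype_coe hA,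
    Measure.toSphere_apply' _ (measurable_subtype_coe hA), Subtype.image_preimage_coe,
    Set.inter_comm]
  simp

lemma sphMeasure_preimage (V : OG n) (A : Set (E n)) (hA : MeasurableSet A) :
    sphMeasure n (V.1 ⁻¹' A) = sphMeasure n A := by
  simp only [sphMeasure, Measure.smul_apply]
  rw [toSphere_map_apply _ hA, toSphere_map_apply _ (V.1.continuous.measurable hA)]
  congr 2
  set W : E n ≃ₗᵢ[ℝ] E n := Unitary.linearIsometryEquiv V with hW
  have hWV : ∀ x, W x = V.1 x := fun x => rfl
  conv_rhs => rw [← W.measurePreserving.measure_preimage_equiv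
    (f := W.toHomeomorph.toMeasurableEquiv)]
  congr 1
  ext x
  simp only [Set.mem_image2, Set.mem_inter_iff, Set.mem_preimage, mem_sphere_zero_iff_norm]
  constructor
  · rintro ⟨r, hr, y, ⟨hy, hy1⟩, rfl⟩
    exact ⟨r, hr, W y, ⟨hy, by simpa using hy1⟩, (map_smul W r y).symm⟩
  · rintro ⟨r, hr, y, ⟨hy, hy1⟩, h⟩
    refine ⟨r, hr, W.symm y, ⟨by rw [← hWV]; simpa using hy, by simpa using hy1⟩, ?_⟩
    change r • y = W x at h
    rw [← map_smul, h]
    exact W.symm_apply_apply x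

lemma isProbabilityMeasure_sphMeasure (hn : 0 < n) : IsProbabilityMeasure (sphMeasure n) := by
  constructor
  have : Nonempty (Fin n) := ⟨⟨0, hn⟩⟩
  have h0 : (volume : Measure (E n)).toSphere.map Subtype.val ≠ 0 := by
    rw [Ne, Measure.map_eq_zero_iff measurable_subtype_coe.aemeasurable]
    exact Measure.toSphere_ne_zero _
  rw [sphMeasure, Measure.smul_apply, smul_eq_mul]
  exact ENNReal.inv_mul_cancel (by simpa using h0) (measure_ne_top _ _)

lemma ae_sphMeasure_norm : ∀ᵐ x ∂sphMeasure n, ‖x‖ = 1 := by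
  refine Measure.ae_smul_measure ?_ _
  rw [ae_map_iff measurable_subtype_coe.aemeasurable
    (measurableSet_eq_fun (by fun_prop) (by fun_prop))]
  exact Filter.Eventually.of_forall fun x => by simp

lemma exists_unit_orthogonal (hn : 2 ≤ n) (e : E n) : ∃ w : E n, ‖w‖ = 1 ∧ ⟪e, w⟫ = 0 := by
  have h : (ℝ ∙ e)ᗮ ≠ ⊥ := by
    intro h
    have h1 := Submodule.finrank_add_finrank_orthogonal (ℝ ∙ e)
    have h2 := finrank_span_le_card (R := ℝ) ({e} : Set (E n))
    rw [h] at h1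
    simp at h1 h2
    omega
  obtain ⟨w, hw, hw0⟩ := Submodule.exists_mem_ne_zero_of_ne_bot h
  refine ⟨‖w‖⁻¹ • w, by simp [norm_smul, hw0], ?_⟩
  rw [inner_smul_right, Submodule.mem_orthogonal_singleton_iff_inner_right.mp hw, mul_zero]

lemma exists_orth_apply_eq (hn : 2 ≤ n) {e e' : E n} (he : ‖e‖ = 1) (he' : ‖e'‖ = 1) :
    ∃ V : OG n, V.1 e = e' := by
  obtain ⟨w, hw, hew⟩ := exists_unit_orthogonal hn e
  obtain ⟨w', hw', hew'⟩ := exists_unit_orthogonal hn e'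
  have hij : (⟨0, by omega⟩ : Fin n) ≠ ⟨1, by omega⟩ := by simp
  obtain ⟨b, rfl, -⟩ := exists_basis_pair he hw hew hij
  obtain ⟨c, rfl, -⟩ := exists_basis_pair he' hw' hew' hij
  obtain ⟨V, hV⟩ := exists_orth_basis b c
  exact ⟨V, hV _⟩

/-- The uniform measure on the sphere is the law of a Haar-random rotation of a unit vector. -/
lemma map_orthHaar_eq_sphMeasure (hn : 2 ≤ n) {e : E n} (he : ‖e‖ = 1) :
    (orthHaar n).map (fun u => u.1 e) = sphMeasure n := by
  have : IsProbabilityMeasure (sphMeasure n) := isProbabilityMeasure_sphMeasure (by omega)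
  ext A hA
  rw [Measure.map_apply (by fun_prop) hA]
  have hc : ∀ e' : E n, ‖e'‖ = 1 →
      orthHaar n ((fun u : OG n => u.1 e') ⁻¹' A) = orthHaar n ((fun u : OG n => u.1 e) ⁻¹' A) := by
    intro e' he'
    obtain ⟨V, rfl⟩ := exists_orth_apply_eq hn he he'
    exact measure_preimage_mul_right (orthHaar n) V ((fun u : OG n => u.1 e) ⁻¹' A)
  have hmeas : MeasurableSet {p : OG n × E n | p.1.1 p.2 ∈ A} := by
    have : Continuous fun p : OG n × E n => p.1.1 p.2 := by fun_prop
    exact this.measurable hA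
  have h1 := Measure.prod_apply (μ := orthHaar n) (ν := sphMeasure n) hmeas
  have h2 := Measure.prod_apply_symm (μ := orthHaar n) (ν := sphMeasure n) hmeas
  rw [h1] at h2
  have h3 : ∀ u : OG n, sphMeasure n (Prod.mk u ⁻¹' {p : OG n × E n | p.1.1 p.2 ∈ A})
      = sphMeasure n A :=
    fun u => sphMeasure_preimage u A hA
  have h4 : (∫⁻ y, orthHaar n ((fun x => (x, y)) ⁻¹' {p : OG n × E n | p.1.1 p.2 ∈ A}) ∂sphMeasure n)
      = ∫⁻ _, orthHaar n ((fun u : OG n => u.1 e) ⁻¹' A) ∂sphMeasure n := by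
    refine lintegral_congr_ae ?_
    filter_upwards [ae_sphMeasure_norm] with y hy using hc y hy
  rw [h4] at h2
  simp only [h3, lintegral_const, measure_univ, mul_one] at h2
  exact h2.symm

lemma integral_sphMeasure_eq (hn : 2 ≤ n) {F : Type*} [NormedAddCommGroup F] [NormedSpace ℝ F]
    {e : E n} (he : ‖e‖ = 1) {g : E n → F} (hg : ContinuousOn g (sphere (0 : E n) 1)) :
    ∫ x, g x ∂sphMeasure n = ∫ u : OG n, g (u.1 e) ∂orthHaar n := by
  have hr : (sphMeasure n).restrict (sphere (0 : E n) 1) = sphMeasure n :=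
    Measure.restrict_eq_self_of_ae_mem (ae_sphMeasure_norm.mono fun x hx => by simpa using hx)
  have hm : AEStronglyMeasurable g (sphMeasure n) := by
    rw [← hr]
    exact hg.aestronglyMeasurable isClosed_sphere.measurableSet
  rw [← map_orthHaar_eq_sphMeasure hn he] at hm ⊢
  exact integral_map (by fun_prop) hm

/-- The point at angle `t` on the great circle through `e` with direction `w`. -/
def arc (e w : E n) (t : ℝ) : E n := Real.cos t • e + Real.sin t • w

lemma norm_arc {e w : E n} (he : ‖e‖ = 1) (hw : ‖w‖ = 1) (hew : ⟪e, w⟫ = 0) (t : ℝ) :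
    ‖arc e w t‖ = 1 := by
  have : ‖arc e w t‖ ^ 2 = 1 := by
    rw [arc, norm_add_sq_real, norm_smul, norm_smul, inner_smul_left, inner_smul_right, hew, he, hw]
    simp
  exact (pow_eq_one_iff_of_nonneg (norm_nonneg _) two_ne_zero).mp this

lemma inner_arc_arc {e w : E n} (he : ‖e‖ = 1) (hw : ‖w‖ = 1) (hew : ⟪e, w⟫ = 0) (t : ℝ) :
    ⟪arc e w t, arc w (-e) t⟫ = 0 := by
  have hwe : ⟪w, e⟫ = 0 := by rw [real_inner_comm]; exact hew
  simp only [arc, inner_add_left, inner_add_right, inner_smul_left, inner_smul_right,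
    inner_neg_right, hew, hwe, real_inner_self_eq_norm_sq, he, hw]
  simp
  ring

lemma hasDerivAt_arc (e w : E n) (t : ℝ) : HasDerivAt (arc e w) (arc w (-e) t) t := by
  have := ((Real.hasDerivAt_cos t).smul_const e).add ((Real.hasDerivAt_sin t).smul_const w)
  have h : arc w (-e) t = -Real.sin t • e + Real.cos t • w := by simp [arc, add_comm]
  rw [h]
  exact this

@[fun_prop]
lemma continuous_arc (e w : E n) : Continuous (arc e w) := by
  unfold arc; fun_prop

lemma norm_orth (u : OG n) (x : E n) : ‖u.1 x‖ = ‖x‖ := Unitary.norm_map u x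

lemma inner_orth (u : OG n) (x y : E n) : ⟪u.1 x, u.1 y⟫ = ⟪x, y⟫ := Unitary.inner_map_map u x y

/-- Invariance of the integral of a function of a rotating frame under motion along the arc. -/
lemma integral_orth_arc {F : Type*} [NormedAddCommGroup F] [NormedSpace ℝ F] (hn : 2 ≤ n)
    (Φ : E n → E n → F) {e w : E n}
    (he : ‖e‖ = 1) (hw : ‖w‖ = 1) (hew : ⟪e, w⟫ = 0) (t : ℝ) :
    ∫ u : OG n, Φ (u.1 (arc e w t)) (u.1 (arc w (-e) t)) ∂orthHaar n
      = ∫ u : OG n, Φ (u.1 e) (u.1 w) ∂orthHaar n := by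
  have hwe : ⟪w, -e⟫ = 0 := by rw [inner_neg_right, real_inner_comm, hew, neg_zero]
  exact integral_orth_pair Φ (norm_arc he hw hew t) (norm_arc hw (by simpa using he) hwe t)
    (inner_arc_arc he hw hew t) he hw hew hn

lemma sq_integral_le (φ : ℝ) (hφ : 0 ≤ φ) {a : ℝ → ℝ} (ha : Continuous a) :
    (∫ s in 0..φ, a s) ^ 2 ≤ φ * ∫ s in 0..φ, a s ^ 2 := by
  rcases hφ.eq_or_lt with rfl | hpos
  · simp
  set I := ∫ s in 0..φ, a s
  have h : 0 ≤ ∫ s in 0..φ, (a s - I / φ) ^ 2 :=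
    intervalIntegral.integral_nonneg hφ fun _ _ => sq_nonneg _
  have h2 : ∫ s in 0..φ, (a s - I / φ) ^ 2 = (∫ s in 0..φ, a s ^ 2) - I ^ 2 / φ := by
    have : ∀ s, (a s - I / φ) ^ 2 = a s ^ 2 - 2 * (I / φ) * a s + (I / φ) ^ 2 := fun s => by ring
    simp_rw [this]
    rw [intervalIntegral.integral_add, intervalIntegral.integral_sub,
      intervalIntegral.integral_const_mul, intervalIntegral.integral_const]
    · simp only [smul_eq_mul, sub_zero]
      change _ - 2 * (I / φ) * I + _ = _
      field_simp
      ring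
    all_goals exact Continuous.intervalIntegrable (by fun_prop) _ _
  rw [h2, sub_nonneg, div_le_iff₀ hpos] at h
  linarith

lemma integrable_prod_orthHaar {F : Type*} [NormedAddCommGroup F] {Φ : OG n → ℝ → F}
    (hΦ : Continuous (Function.uncurry Φ)) (T : ℝ) :
    Integrable (Function.uncurry Φ) ((orthHaar n).prod (volume.restrict (Set.Ioc 0 T))) := by
  rw [← Measure.restrict_univ (μ := orthHaar n), Measure.prod_restrict]
  exact (hΦ.continuousOn.integrableOn_compact (isCompact_univ.prod isCompact_Icc)).mono_set
    (Set.prod_mono_right Set.Ioc_subset_Icc_self)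

/-- Squared increments along random great-circle arcs are controlled by the tangential
derivative. -/
lemma integral_sq_sub_arc_le (hn : 2 ≤ n) {g : E n → E n} {U : Set (E n)} (hU : IsOpen U)
    (hUS : sphere (0 : E n) 1 ⊆ U) (hg : ContDiffOn ℝ 1 g U) {e w : E n}
    (he : ‖e‖ = 1) (hw : ‖w‖ = 1) (hew : ⟪e, w⟫ = 0) {φ : ℝ} (hφ : 0 ≤ φ) :
    ∫ u : OG n, ‖g (u.1 (arc e w φ)) - g (u.1 e)‖ ^ 2 ∂orthHaar n
      ≤ φ ^ 2 * ∫ u : OG n, ‖fderiv ℝ g (u.1 e) (u.1 w)‖ ^ 2 ∂orthHaar n := by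
  have hmem : ∀ (u : OG n) (t : ℝ), u.1 (arc e w t) ∈ sphere (0 : E n) 1 := fun u t => by
    simp [norm_orth, norm_arc he hw hew]
  have hDc : ContinuousOn (fderiv ℝ g) U := hg.continuousOn_fderiv_of_isOpen hU le_rfl
  have hD : Continuous fun p : OG n × ℝ =>
      fderiv ℝ g (p.1.1 (arc e w p.2)) (p.1.1 (arc w (-e) p.2)) := by
    refine Continuous.clm_apply ?_ (by fun_prop)
    exact hDc.comp_continuous (by fun_prop) fun p => hUS (hmem _ _)
  have hDu : ∀ u : OG n, Continuous fun s : ℝ =>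
      fderiv ℝ g (u.1 (arc e w s)) (u.1 (arc w (-e) s)) := fun u =>
    hD.comp (by fun_prop : Continuous fun s : ℝ => ((u, s) : OG n × ℝ))
  have hgc : ∀ t, Continuous fun u : OG n => g (u.1 (arc e w t)) := fun t =>
    hg.continuousOn.comp_continuous (by fun_prop) fun u => hUS (hmem _ _)
  have hpt : ∀ u : OG n, ‖g (u.1 (arc e w φ)) - g (u.1 e)‖ ^ 2
      ≤ φ * ∫ s in 0..φ, ‖fderiv ℝ g (u.1 (arc e w s)) (u.1 (arc w (-e) s))‖ ^ 2 := by
    intro u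
    have hder : ∀ s, HasDerivAt (fun s => g (u.1 (arc e w s)))
        (fderiv ℝ g (u.1 (arc e w s)) (u.1 (arc w (-e) s))) s := by
      intro s
      have h1 : HasFDerivAt g (fderiv ℝ g (u.1 (arc e w s))) (u.1 (arc e w s)) :=
        ((hg.contDiffAt (hU.mem_nhds (hUS (hmem u s)))).differentiableAt (by simp)).hasFDerivAt
      exact h1.comp_hasDerivAt s (u.1.hasFDerivAt.comp_hasDerivAt s (hasDerivAt_arc e w s))
    have hftc := intervalIntegral.integral_eq_sub_of_hasDerivAt (a := 0) (b := φ)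
      (fun s _ => hder s) ((hDu u).intervalIntegrable _ _)
    have h0 : arc e w 0 = e := by simp [arc]
    rw [h0] at hftc
    rw [← hftc]
    refine le_trans ?_ (sq_integral_le φ hφ (hDu u).norm)
    gcongr
    exact intervalIntegral.norm_integral_le_integral_norm hφ
  have hD2 : Continuous fun p : OG n × ℝ =>
      ‖fderiv ℝ g (p.1.1 (arc e w p.2)) (p.1.1 (arc w (-e) p.2))‖ ^ 2 := hD.norm.pow 2
  have hint := integrable_prod_orthHaar (Φ := fun (u : OG n) (s : ℝ) =>
      ‖fderiv ℝ g (u.1 (arc e w s)) (u.1 (arc w (-e) s))‖ ^ 2) hD2 φ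
  simp only [intervalIntegral.integral_of_le hφ] at hpt
  calc ∫ u : OG n, ‖g (u.1 (arc e w φ)) - g (u.1 e)‖ ^ 2 ∂orthHaar n
      ≤ ∫ u : OG n, φ * (∫ s in Set.Ioc 0 φ,
          ‖fderiv ℝ g (u.1 (arc e w s)) (u.1 (arc w (-e) s))‖ ^ 2) ∂orthHaar n := by
        refine integral_mono (integrable_of_continuous ?_) (hint.integral_prod_left.const_mul φ) hpt
        have := hgc 0
        simp only [arc, Real.cos_zero, Real.sin_zero, one_smul, zero_smul, add_zero] at this
        exact ((hgc φ).sub this).norm.pow 2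
    _ = φ * ∫ s in Set.Ioc 0 φ, ∫ u : OG n,
          ‖fderiv ℝ g (u.1 (arc e w s)) (u.1 (arc w (-e) s))‖ ^ 2 ∂orthHaar n := by
        rw [integral_const_mul, integral_integral_swap hint]
    _ = φ ^ 2 * ∫ u : OG n, ‖fderiv ℝ g (u.1 e) (u.1 w)‖ ^ 2 ∂orthHaar n := by
        simp_rw [integral_orth_arc hn (fun x y => ‖fderiv ℝ g x y‖ ^ 2) he hw hew]
        rw [setIntegral_const]
        simp [Measure.real, hφ]
        ring

lemma hsNormSq_eq_sum_basis (A : E n →L[ℝ] E n) (b : OrthonormalBasis (Fin n) ℝ (E n)) :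
    hsNormSq A = ∑ i, ‖A (b i)‖ ^ 2 := by
  have key : ∀ c : OrthonormalBasis (Fin n) ℝ (E n),
      ∑ i, ‖A (c i)‖ ^ 2 = ∑ j, ‖ContinuousLinearMap.adjoint A (b j)‖ ^ 2 := by
    intro c
    simp_rw [← b.sum_sq_inner_right (A (c _)),
      ← c.sum_sq_inner_left (ContinuousLinearMap.adjoint A (b _)),
      ContinuousLinearMap.adjoint_inner_left]
    exact Finset.sum_comm
  rw [key b, ← key (EuclideanSpace.basisFun (Fin n) ℝ)]
  simp [hsNormSq]

lemma continuous_comp_orth {F : Type*} [TopologicalSpace F] {g : E n → F}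
    (hg : ContinuousOn g (sphere (0 : E n) 1)) {e : E n} (he : ‖e‖ = 1) :
    Continuous fun u : OG n => g (u.1 e) :=
  hg.comp_continuous (by fun_prop) fun u => by simp [norm_orth, he]

lemma mul_integral_tangential_le (hn : 2 ≤ n) {A : E n → E n →L[ℝ] E n}
    (hA : ContinuousOn A (sphere (0 : E n) 1)) {e w : E n}
    (he : ‖e‖ = 1) (hw : ‖w‖ = 1) (hew : ⟪e, w⟫ = 0) :
    ((n : ℝ) - 1) * ∫ u : OG n, ‖A (u.1 e) (u.1 w)‖ ^ 2 ∂orthHaar n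
      ≤ ∫ u : OG n, hsNormSq (A (u.1 e)) ∂orthHaar n := by
  classical
  let i0 : Fin n := ⟨0, by omega⟩
  have hij : i0 ≠ ⟨1, by omega⟩ := by simp [i0]
  obtain ⟨b, rfl, rfl⟩ := exists_basis_pair he hw hew hij
  have hAc := continuous_comp_orth hA he
  have hint : ∀ j, Integrable (fun u : OG n => ‖A (u.1 (b i0)) (u.1 (b j))‖ ^ 2) (orthHaar n) :=
    fun j => integrable_of_continuous ((hAc.clm_apply (by fun_prop)).norm.pow 2)
  have hhs : ∀ u : OG n, hsNormSq (A (u.1 (b i0))) = ∑ j, ‖A (u.1 (b i0)) (u.1 (b j))‖ ^ 2 := by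
    intro u
    rw [hsNormSq_eq_sum_basis _ (b.map (Unitary.linearIsometryEquiv u))]
    simp only [OrthonormalBasis.map_apply]
    rfl
  simp_rw [hhs]
  rw [integral_finsetSum _ fun j _ => hint j,
    ← Finset.add_sum_erase _ _ (Finset.mem_univ i0)]
  have hsum : ∑ j ∈ Finset.univ.erase i0, ∫ u : OG n, ‖A (u.1 (b i0)) (u.1 (b j))‖ ^ 2 ∂orthHaar n
      = ((n : ℝ) - 1) * ∫ u : OG n, ‖A (u.1 (b i0)) (u.1 (b ⟨1, by omega⟩))‖ ^ 2 ∂orthHaar n := by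
    rw [Finset.sum_congr rfl fun j hj => integral_orth_pair (fun x y => ‖A x y‖ ^ 2)
      (b.norm_eq_one i0) (b.norm_eq_one j) (b.inner_eq_zero (Finset.ne_of_mem_erase hj).symm)
      he hw hew hn]
    rw [Finset.sum_const, Finset.card_erase_of_mem (Finset.mem_univ _), nsmul_eq_mul]
    simp [Nat.cast_sub (show 1 ≤ n by omega)]
  rw [hsum]
  have : 0 ≤ ∫ u : OG n, ‖A (u.1 (b i0)) (u.1 (b i0))‖ ^ 2 ∂orthHaar n :=
    integral_nonneg fun _ => sq_nonneg _
  linarith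

lemma exists_eq_arc (hn : 2 ≤ n) {e z : E n} (he : ‖e‖ = 1) (hz : ‖z‖ = 1) :
    ∃ w : E n, ‖w‖ = 1 ∧ ⟪e, w⟫ = 0 ∧ z = arc e w (Real.arccos ⟪e, z⟫) := by
  have hle := abs_le.mp ((abs_real_inner_le_norm e z).trans_eq
    (show ‖e‖ * ‖z‖ = 1 by simp [he, hz]))
  set c := ⟪e, z⟫ with hc
  have hy : ‖z - c • e‖ = Real.sqrt (1 - c ^ 2) := by
    rw [eq_comm, Real.sqrt_eq_iff_eq_sq (by nlinarith) (norm_nonneg _), norm_sub_sq_real,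
      inner_smul_right, norm_smul, he, hz, real_inner_comm, ← hc]
    simp
    ring
  by_cases h0 : z - c • e = 0
  · obtain ⟨w, hw, hew⟩ := exists_unit_orthogonal hn e
    refine ⟨w, hw, hew, ?_⟩
    rw [h0, norm_zero] at hy
    rw [arc, Real.cos_arccos hle.1 hle.2, Real.sin_arccos, ← hy, zero_smul, add_zero]
    exact sub_eq_zero.mp h0
  · refine ⟨‖z - c • e‖⁻¹ • (z - c • e), by simp [norm_smul, h0], ?_, ?_⟩
    · rw [inner_smul_right, inner_sub_right, inner_smul_right, real_inner_self_eq_norm_sq, he, ← hc]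
      simp
    · rw [arc, Real.cos_arccos hle.1 hle.2, Real.sin_arccos, ← hy, smul_smul,
        mul_inv_cancel₀ (norm_ne_zero_iff.mpr h0), one_smul]
      abel

lemma integral_arcsin_cos_sq :
    ∫ t in 0..Real.pi, Real.arcsin (Real.cos t) ^ 2 = Real.pi ^ 3 / 12 := by
  have h : ∀ t ∈ Set.uIcc 0 Real.pi, Real.arcsin (Real.cos t) ^ 2 = (Real.pi / 2 - t) ^ 2 := by
    intro t ht
    rw [Set.uIcc_of_le Real.pi_pos.le] at ht
    rw [Real.arcsin_eq_pi_div_two_sub_arccos, Real.arccos_cos ht.1 ht.2]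
  rw [intervalIntegral.integral_congr h,
    intervalIntegral.integral_comp_sub_left (fun x : ℝ => x ^ 2), integral_pow]
  ring

lemma arcsin_sq_le_of_abs_le {x y : ℝ} (h : |x| ≤ |y|) :
    Real.arcsin x ^ 2 ≤ Real.arcsin y ^ 2 := by
  have habs : ∀ z : ℝ, |Real.arcsin z| = Real.arcsin |z| := by
    intro z
    rcases le_total 0 z with hz | hz
    · rw [abs_of_nonneg hz, abs_of_nonneg (Real.arcsin_nonneg.mpr hz)]
    · rw [abs_of_nonpos hz, abs_of_nonpos (Real.arcsin_nonpos.mpr hz), Real.arcsin_neg]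
  rw [sq_le_sq, habs, habs]
  exact Real.monotone_arcsin h

lemma integral_arcsin_sq_le {x y : ℝ} (h : x ^ 2 + y ^ 2 ≤ 1) :
    ∫ t in 0..Real.pi, Real.arcsin (Real.cos t * x + Real.sin t * y) ^ 2 ≤ Real.pi ^ 3 / 12 := by
  set z : ℂ := ⟨x, y⟩
  have hρ : ‖z‖ ≤ 1 := by
    rw [← sq_le_one_iff₀ (norm_nonneg z), Complex.sq_norm, Complex.normSq_mk]
    linarith
  have hx : x = ‖z‖ * Real.cos z.arg := by rw [Complex.norm_mul_cos_arg]
  have hy : y = ‖z‖ * Real.sin z.arg := by rw [Complex.norm_mul_sin_arg]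
  have hper : Function.Periodic (fun t => Real.arcsin (Real.cos t) ^ 2) Real.pi := fun t => by
    simp [Real.cos_add_pi, Real.arcsin_neg]
  have hc : Continuous fun t => Real.arcsin (Real.cos t) ^ 2 :=
    (Real.continuous_arcsin.comp Real.continuous_cos).pow 2
  calc ∫ t in 0..Real.pi, Real.arcsin (Real.cos t * x + Real.sin t * y) ^ 2
      ≤ ∫ t in 0..Real.pi, Real.arcsin (Real.cos (t - z.arg)) ^ 2 := by
        refine intervalIntegral.integral_mono Real.pi_pos.le ?_ ?_ fun t => ?_
        · exact ((Real.continuous_arcsin.comp (by fun_prop)).pow 2).intervalIntegrable _ _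
        · exact (hc.comp (by fun_prop : Continuous fun t : ℝ => t - z.arg)).intervalIntegrable _ _
        · refine arcsin_sq_le_of_abs_le ?_
          have : Real.cos t * x + Real.sin t * y = ‖z‖ * Real.cos (t - z.arg) := by
            rw [Real.cos_sub, hx, hy]; ring
          rw [this, abs_mul, abs_norm]
          exact mul_le_of_le_one_left (abs_nonneg _) hρ
    _ = ∫ t in (0 - z.arg)..(0 - z.arg + Real.pi), Real.arcsin (Real.cos t) ^ 2 := by
        rw [intervalIntegral.integral_comp_sub_right (fun t => Real.arcsin (Real.cos t) ^ 2)]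
        congr 1
        ring
    _ = Real.pi ^ 3 / 12 := by
        rw [hper.intervalIntegral_add_eq _ 0, zero_add, integral_arcsin_cos_sq]

lemma integral_arccos_sq_le (hn : 2 ≤ n) {e : E n} (he : ‖e‖ = 1) :
    ∫ u : OG n, Real.arccos ⟪e, u.1 e⟫ ^ 2 ∂orthHaar n ≤ Real.pi ^ 2 / 3 := by
  obtain ⟨w, hw, hew⟩ := exists_unit_orthogonal hn e
  have hasc : ∀ x : E n, Continuous fun u : OG n => Real.arcsin ⟪e, u.1 x⟫ := fun x =>
    Real.continuous_arcsin.comp (by fun_prop)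
  have hodd : ∫ u : OG n, Real.arcsin ⟪e, u.1 e⟫ ∂orthHaar n = 0 := by
    have := integral_orth_pair (fun x _ => Real.arcsin ⟪e, x⟫) he hw hew (e' := -e) (w' := w)
      (by simpa using he) hw (by simpa using hew) hn
    simp only [map_neg, inner_neg_right, Real.arcsin_neg, integral_neg] at this
    linarith
  have hsq : Real.pi * ∫ u : OG n, Real.arcsin ⟪e, u.1 e⟫ ^ 2 ∂orthHaar n ≤ Real.pi ^ 3 / 12 := by
    have hcont : Continuous (Function.uncurry fun (u : OG n) (t : ℝ) =>
        Real.arcsin ⟪e, u.1 (arc e w t)⟫ ^ 2) := by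
      have : Continuous fun p : OG n × ℝ => ⟪e, p.1.1 (arc e w p.2)⟫ := by fun_prop
      exact (Real.continuous_arcsin.comp this).pow 2
    have hint := integrable_prod_orthHaar hcont Real.pi
    calc Real.pi * ∫ u : OG n, Real.arcsin ⟪e, u.1 e⟫ ^ 2 ∂orthHaar n
        = ∫ t in Set.Ioc 0 Real.pi, ∫ u : OG n, Real.arcsin ⟪e, u.1 (arc e w t)⟫ ^ 2 ∂orthHaar n := by
          simp_rw [integral_orth_arc hn (fun x _ => Real.arcsin ⟪e, x⟫ ^ 2) he hw hew]
          rw [setIntegral_const]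
          simp [Measure.real, Real.pi_pos.le]
      _ = ∫ u : OG n, (∫ t in Set.Ioc 0 Real.pi, Real.arcsin ⟪e, u.1 (arc e w t)⟫ ^ 2)
          ∂orthHaar n :=
          (integral_integral_swap hint).symm
      _ ≤ ∫ _ : OG n, Real.pi ^ 3 / 12 ∂orthHaar n := by
          refine integral_mono hint.integral_prod_left (integrable_const _) fun u => ?_
          have hb : ⟪e, u.1 e⟫ ^ 2 + ⟪e, u.1 w⟫ ^ 2 ≤ 1 := by
            have hij : (⟨0, by omega⟩ : Fin n) ≠ ⟨1, by omega⟩ := by simp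
            obtain ⟨b, h0, h1⟩ := exists_basis_pair (e := u.1 e) (w := u.1 w)
              (by rw [norm_orth, he]) (by rw [norm_orth, hw]) (by rw [inner_orth, hew]) hij
            have h2 := b.sum_sq_inner_left e
            rw [he] at h2
            have h3 := Finset.sum_le_sum_of_subset_of_nonneg
              (f := fun i => ⟪e, b i⟫ ^ 2) (Finset.subset_univ {⟨0, by omega⟩, ⟨1, by omega⟩})
              fun i _ _ => sq_nonneg _
            rw [Finset.sum_pair hij, h2, h0, h1] at h3
            simpa using h3
          have := integral_arcsin_sq_le hb
          rw [intervalIntegral.integral_of_le Real.pi_pos.le] at this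
          simpa [arc, inner_add_right, inner_smul_right] using this
      _ = Real.pi ^ 3 / 12 := by simp
  have hexp : ∀ u : OG n, Real.arccos ⟪e, u.1 e⟫ ^ 2
      = Real.pi ^ 2 / 4 - Real.pi * Real.arcsin ⟪e, u.1 e⟫ + Real.arcsin ⟪e, u.1 e⟫ ^ 2 := fun u => by
    rw [Real.arccos_eq_pi_div_two_sub_arcsin]; ring
  simp_rw [hexp]
  rw [integral_add, integral_sub, integral_const_mul, hodd]
  · simp only [integral_const, probReal_univ, one_smul, mul_zero, sub_zero]
    have : ∫ u : OG n, Real.arcsin ⟪e, u.1 e⟫ ^ 2 ∂orthHaar n ≤ Real.pi ^ 2 / 12 := by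
      refine le_of_mul_le_mul_left (hsq.trans_eq ?_) Real.pi_pos
      ring
    linarith
  all_goals
    refine integrable_of_continuous ?_
    have := hasc e
    fun_prop

lemma integral_norm_sub_sq_eq {G : OG n → E n} (hG : Continuous G) (y : E n) :
    ∫ v, ‖G v - y‖ ^ 2 ∂orthHaar n
      = ∫ v, ‖G v - ∫ u, G u ∂orthHaar n‖ ^ 2 ∂orthHaar n
        + ‖y - ∫ u, G u ∂orthHaar n‖ ^ 2 := by
  set m := ∫ u, G u ∂orthHaar n with hm
  have h1 : ∀ v, ‖G v - y‖ ^ 2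
      = ‖G v - m‖ ^ 2 - 2 * ⟪y - m, G v - m⟫ + ‖y - m‖ ^ 2 := fun v => by
    rw [← sub_sub_sub_cancel_right _ y m, norm_sub_sq_real, real_inner_comm]
  have h2 : ∫ v, ⟪y - m, G v - m⟫ ∂orthHaar n = 0 := by
    rw [integral_inner (integrable_of_continuous (by fun_prop)),
      integral_sub (integrable_of_continuous hG) (integrable_const _), ← hm]
    simp
  simp_rw [h1]
  rw [integral_add, integral_sub, integral_const_mul, h2]
  · simp
  all_goals exact integrable_of_continuous (by fun_prop)

/-- Poincaré inequality on the sphere, with constant `π² / 6` times the optimal one. -/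
lemma integral_sq_sub_mean_le (hn : 2 ≤ n) {g : E n → E n} {U : Set (E n)} (hU : IsOpen U)
    (hUS : sphere (0 : E n) 1 ⊆ U) (hg : ContDiffOn ℝ 1 g U) {e : E n} (he : ‖e‖ = 1) :
    ((n : ℝ) - 1) * ∫ u : OG n, ‖g (u.1 e) - ∫ v : OG n, g (v.1 e) ∂orthHaar n‖ ^ 2 ∂orthHaar n
      ≤ Real.pi ^ 2 / 6 * ∫ u : OG n, hsNormSq (fderiv ℝ g (u.1 e)) ∂orthHaar n := by
  obtain ⟨w, hw, hew⟩ := exists_unit_orthogonal hn e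
  set m := ∫ v : OG n, g (v.1 e) ∂orthHaar n with hm
  set J := ∫ u : OG n, ‖fderiv ℝ g (u.1 e) (u.1 w)‖ ^ 2 ∂orthHaar n with hJ
  have hJ0 : 0 ≤ J := integral_nonneg fun _ => sq_nonneg _
  have hHS := mul_integral_tangential_le hn
    ((hg.continuousOn_fderiv_of_isOpen hU le_rfl).mono hUS) he hw hew
  have hgs : ContinuousOn g (sphere (0 : E n) 1) := hg.continuousOn.mono hUS
  have hgc := continuous_comp_orth hgs he
  have hc1 : Continuous fun v : OG n => ‖g (v.1 e) - m‖ ^ 2 :=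
    (hgc.sub continuous_const).norm.pow 2
  have hc2 : Continuous fun p : OG n × OG n => ‖g ((p.1 * p.2).1 e) - g (p.1.1 e)‖ ^ 2 :=
    ((hgc.comp continuous_mul).sub (hgc.comp continuous_fst)).norm.pow 2
  have hint2 : Integrable (Function.uncurry fun u v : OG n => ‖g ((u * v).1 e) - g (u.1 e)‖ ^ 2)
      ((orthHaar n).prod (orthHaar n)) :=
    hc2.integrable_of_hasCompactSupport (HasCompactSupport.of_compactSpace _)
  have hvar := integral_norm_sub_sq_eq hgc
  rw [← hm] at hvar
  have hlow : ∫ u : OG n, (∫ v : OG n, ‖g ((u * v).1 e) - g (u.1 e)‖ ^ 2 ∂orthHaar n) ∂orthHaar n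
      = 2 * ∫ u : OG n, ‖g (u.1 e) - m‖ ^ 2 ∂orthHaar n := by
    have : ∀ u : OG n, ∫ v : OG n, ‖g ((u * v).1 e) - g (u.1 e)‖ ^ 2 ∂orthHaar n
        = ∫ v : OG n, ‖g (v.1 e) - m‖ ^ 2 ∂orthHaar n + ‖g (u.1 e) - m‖ ^ 2 := fun u => by
      rw [integral_mul_left_eq_self (fun v : OG n => ‖g (v.1 e) - g (u.1 e)‖ ^ 2) u, hvar]
    simp_rw [this]
    rw [integral_add (integrable_const _) (integrable_of_continuous hc1)]
    simp
    ring
  have hup : ∫ u : OG n, (∫ v : OG n, ‖g ((u * v).1 e) - g (u.1 e)‖ ^ 2 ∂orthHaar n) ∂orthHaar n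
      ≤ Real.pi ^ 2 / 3 * J := by
    rw [integral_integral_swap hint2]
    calc _ ≤ ∫ v : OG n, Real.arccos ⟪e, v.1 e⟫ ^ 2 * J ∂orthHaar n := by
          refine integral_mono hint2.integral_prod_right (integrable_of_continuous ?_) fun v => ?_
          · have := Real.continuous_arccos.comp
              (by fun_prop : Continuous fun v : OG n => ⟪e, v.1 e⟫)
            exact (this.pow 2).mul continuous_const
          · obtain ⟨w', hw', hew', hv⟩ := exists_eq_arc hn he (by rw [norm_orth, he] : ‖v.1 e‖ = 1)
            have h := integral_sq_sub_arc_le hn hU hUS hg he hw' hew'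
              (Real.arccos_nonneg ⟪e, v.1 e⟫)
            rw [← hv, integral_orth_pair (fun x y => ‖fderiv ℝ g x y‖ ^ 2) he hw' hew' he hw hew hn]
              at h
            exact h
      _ ≤ _ := by
          rw [integral_mul_const]
          exact mul_le_mul_of_nonneg_right (integral_arccos_sq_le hn he) hJ0
  have hn1 : (0 : ℝ) ≤ (n : ℝ) - 1 := by
    have : (2 : ℝ) ≤ n := by exact_mod_cast hn
    linarith
  rw [hlow] at hup
  have h1 := mul_le_mul_of_nonneg_left hup hn1
  have h2 := mul_le_mul_of_nonneg_left hHS (by positivity : (0 : ℝ) ≤ Real.pi ^ 2 / 6)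
  linarith

/-- Integration by parts over the orthogonal group. -/
lemma integral_gradient_tangential (hn : 2 ≤ n) {f : E n → ℝ} {U : Set (E n)} (hU : IsOpen U)
    (hUS : sphere (0 : E n) 1 ⊆ U) (hf : ContDiffOn ℝ 1 f U) (v : E n) {e w : E n}
    (he : ‖e‖ = 1) (hw : ‖w‖ = 1) (hew : ⟪e, w⟫ = 0) :
    ∫ u : OG n, fderiv ℝ f (u.1 e) (u.1 w) * ⟪v, u.1 w⟫ ∂orthHaar n
      = ∫ u : OG n, ⟪v, u.1 e⟫ * f (u.1 e) ∂orthHaar n := by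
  let Φ : E n → E n → ℝ := fun x y => fderiv ℝ f x y * ⟪v, y⟫ - ⟪v, x⟫ * f x
  have hmem : ∀ (u : OG n) (t : ℝ), u.1 (arc e w t) ∈ sphere (0 : E n) 1 := fun u t => by
    simp [norm_orth, norm_arc he hw hew]
  have hDc : ContinuousOn (fderiv ℝ f) U := hf.continuousOn_fderiv_of_isOpen hU le_rfl
  have hfc : Continuous fun p : OG n × ℝ => f (p.1.1 (arc e w p.2)) :=
    hf.continuousOn.comp_continuous (by fun_prop) fun p => hUS (hmem _ _)
  have hDfc : Continuous fun p : OG n × ℝ => fderiv ℝ f (p.1.1 (arc e w p.2)) :=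
    hDc.comp_continuous (by fun_prop) fun p => hUS (hmem _ _)
  have hΦc : Continuous fun p : OG n × ℝ =>
      Φ (p.1.1 (arc e w p.2)) (p.1.1 (arc w (-e) p.2)) := by
    have := hDfc.clm_apply
      (by fun_prop : Continuous fun p : OG n × ℝ => p.1.1 (arc w (-e) p.2))
    exact (this.mul (by fun_prop)).sub (Continuous.mul (by fun_prop) hfc)
  have hΦu : ∀ u : OG n, Continuous fun s : ℝ =>
      Φ (u.1 (arc e w s)) (u.1 (arc w (-e) s)) := fun u =>
    hΦc.comp (by fun_prop : Continuous fun s : ℝ => ((u, s) : OG n × ℝ))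
  have hder : ∀ (u : OG n) (s : ℝ),
      HasDerivAt (fun s => f (u.1 (arc e w s)) * ⟪v, u.1 (arc w (-e) s)⟫)
        (Φ (u.1 (arc e w s)) (u.1 (arc w (-e) s))) s := by
    intro u s
    have h1 : HasFDerivAt f (fderiv ℝ f (u.1 (arc e w s))) (u.1 (arc e w s)) :=
      ((hf.contDiffAt (hU.mem_nhds (hUS (hmem u s)))).differentiableAt (by simp)).hasFDerivAt
    have h2 := h1.comp_hasDerivAt s (u.1.hasFDerivAt.comp_hasDerivAt s (hasDerivAt_arc e w s))
    have h3 := (innerSL ℝ v).hasFDerivAt.comp_hasDerivAt s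
      (u.1.hasFDerivAt.comp_hasDerivAt s (hasDerivAt_arc w (-e) s))
    have h4 : arc (-e) (-w) s = -arc e w s := by simp [arc]; abel
    rw [h4] at h3
    refine (h2.mul h3).congr_deriv ?_
    simp [Φ]
    ring
  have hint := integrable_prod_orthHaar
    (Φ := fun (u : OG n) (s : ℝ) => Φ (u.1 (arc e w s)) (u.1 (arc w (-e) s))) hΦc 1
  have hftc : ∀ u : OG n,
      ∫ s in Set.Ioc (0 : ℝ) 1, Φ (u.1 (arc e w s)) (u.1 (arc w (-e) s))
        = f (u.1 (arc e w 1)) * ⟪v, u.1 (arc w (-e) 1)⟫ - f (u.1 e) * ⟪v, u.1 w⟫ := by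
    intro u
    rw [← intervalIntegral.integral_of_le zero_le_one,
      intervalIntegral.integral_eq_sub_of_hasDerivAt (fun s _ => hder u s)
        ((hΦu u).intervalIntegrable _ _)]
    simp [arc]
  have hfe : Continuous fun u : OG n => f (u.1 e) :=
    continuous_comp_orth (hf.continuousOn.mono hUS) he
  have hDe : Continuous fun u : OG n => fderiv ℝ f (u.1 e) :=
    continuous_comp_orth (hDc.mono hUS) he
  have h0 : ∫ u : OG n, Φ (u.1 e) (u.1 w) ∂orthHaar n = 0 := by
    calc ∫ u : OG n, Φ (u.1 e) (u.1 w) ∂orthHaar n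
        = ∫ s in Set.Ioc (0 : ℝ) 1,
            ∫ u : OG n, Φ (u.1 (arc e w s)) (u.1 (arc w (-e) s)) ∂orthHaar n := by
          simp_rw [integral_orth_arc hn Φ he hw hew]
          simp
      _ = ∫ u : OG n, (∫ s in Set.Ioc (0 : ℝ) 1, Φ (u.1 (arc e w s)) (u.1 (arc w (-e) s)))
            ∂orthHaar n := (integral_integral_swap hint).symm
      _ = 0 := by
          simp_rw [hftc]
          rw [integral_sub, integral_orth_arc hn (fun x y => f x * ⟪v, y⟫) he hw hew, sub_self]
          · have : Continuous fun u : OG n => f (u.1 (arc e w 1)) :=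
              hfc.comp (by fun_prop : Continuous fun u : OG n => ((u, 1) : OG n × ℝ))
            exact integrable_of_continuous (this.mul (by fun_prop))
          · exact integrable_of_continuous (hfe.mul (by fun_prop))
  simp only [Φ] at h0
  rw [integral_sub] at h0
  · linarith
  · have := hDe.clm_apply (by fun_prop : Continuous fun u : OG n => u.1 w)
    exact integrable_of_continuous (this.mul (by fun_prop))
  · exact integrable_of_continuous (Continuous.mul (by fun_prop) hfe)

/-- If `f` is orthogonal to linear functions, the mean of its gradient only sees the radial
component of the gradient. -/
lemma inner_integral_gradient_eq (hn : 2 ≤ n) {f : E n → ℝ} {U : Set (E n)} (hU : IsOpen U)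
    (hUS : sphere (0 : E n) 1 ⊆ U) (hf : ContDiffOn ℝ 1 f U) {e : E n} (he : ‖e‖ = 1)
    (v : E n) (hlin : ∫ u : OG n, ⟪v, u.1 e⟫ * f (u.1 e) ∂orthHaar n = 0) :
    ∫ u : OG n, fderiv ℝ f (u.1 e) v ∂orthHaar n
      = ∫ u : OG n, fderiv ℝ f (u.1 e) (u.1 e) * ⟪v, u.1 e⟫ ∂orthHaar n := by
  let i0 : Fin n := ⟨0, by omega⟩
  have hij : i0 ≠ ⟨1, by omega⟩ := by simp [i0]
  obtain ⟨w, hw, hew⟩ := exists_unit_orthogonal hn e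
  obtain ⟨b, rfl, -⟩ := exists_basis_pair he hw hew hij
  have hDe : Continuous fun u : OG n => fderiv ℝ f (u.1 (b i0)) :=
    continuous_comp_orth ((hf.continuousOn_fderiv_of_isOpen hU le_rfl).mono hUS) he
  have hexp : ∀ u : OG n, fderiv ℝ f (u.1 (b i0)) v
      = ∑ j, fderiv ℝ f (u.1 (b i0)) (u.1 (b j)) * ⟪v, u.1 (b j)⟫ := by
    intro u
    conv_lhs => rw [← (b.map (Unitary.linearIsometryEquiv u)).sum_repr' v]
    rw [map_sum]
    refine Finset.sum_congr rfl fun j _ => ?_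
    rw [map_smul, smul_eq_mul, mul_comm, real_inner_comm]
    rfl
  simp_rw [hexp]
  rw [integral_finsetSum]
  · refine Finset.sum_eq_single i0 (fun j _ hj => ?_) (by simp)
    rw [integral_gradient_tangential hn hU hUS hf v he (b.norm_eq_one j)
      (b.inner_eq_zero hj.symm), hlin]
  · intro j _
    have := hDe.clm_apply (by fun_prop : Continuous fun u : OG n => u.1 (b j))
    exact integrable_of_continuous (this.mul (by fun_prop))

lemma integral_inner_orth_sq (hn : 2 ≤ n) {e : E n} (he : ‖e‖ = 1) (v : E n) :
    n * ∫ u : OG n, ⟪v, u.1 e⟫ ^ 2 ∂orthHaar n = ‖v‖ ^ 2 := by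
  have hij : (⟨0, by omega⟩ : Fin n) ≠ ⟨1, by omega⟩ := by simp
  obtain ⟨w, hw, hew⟩ := exists_unit_orthogonal hn e
  obtain ⟨b, rfl, -⟩ := exists_basis_pair he hw hew hij
  have h : ∀ u : OG n, ∑ j, ⟪v, u.1 (b j)⟫ ^ 2 = ‖v‖ ^ 2 := fun u =>
    (b.map (Unitary.linearIsometryEquiv u)).sum_sq_inner_left v
  have h2 : ∫ u : OG n, ∑ j, ⟪v, u.1 (b j)⟫ ^ 2 ∂orthHaar n = ‖v‖ ^ 2 := by
    simp_rw [h]; simp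
  rw [integral_finsetSum _ fun j _ => integrable_of_continuous (by fun_prop)] at h2
  have hj : ∀ j, ∫ u : OG n, ⟪v, u.1 (b j)⟫ ^ 2 ∂orthHaar n
      = ∫ u : OG n, ⟪v, u.1 (b ⟨0, by omega⟩)⟫ ^ 2 ∂orthHaar n := fun j => by
    obtain ⟨w', hw', hew'⟩ := exists_unit_orthogonal hn (b j)
    exact integral_orth_pair (fun x _ => ⟪v, x⟫ ^ 2) (b.norm_eq_one j) hw' hew' he hw hew hn
  simpa [hj] using h2

/-- The mean gradient is controlled by the variance of the gradient. -/
lemma norm_integral_gradient_sq_le (hn : 2 ≤ n) {f : E n → ℝ} {U : Set (E n)} (hU : IsOpen U)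
    (hUS : sphere (0 : E n) 1 ⊆ U) (hf : ContDiffOn ℝ 1 f U) {e : E n} (he : ‖e‖ = 1)
    (hlin : ∀ v, ∫ u : OG n, ⟪v, u.1 e⟫ * f (u.1 e) ∂orthHaar n = 0) :
    ((n : ℝ) - 1) ^ 2 * ‖∫ v : OG n, gradient f (v.1 e) ∂orthHaar n‖ ^ 2
      ≤ n * ∫ u : OG n, ‖gradient f (u.1 e) - ∫ v : OG n, gradient f (v.1 e) ∂orthHaar n‖ ^ 2
        ∂orthHaar n := by
  have hgc : Continuous fun u : OG n => gradient f (u.1 e) :=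
    (InnerProductSpace.toDual ℝ (E n)).symm.continuous.comp
      (continuous_comp_orth ((hf.continuousOn_fderiv_of_isOpen hU le_rfl).mono hUS) he)
  have hfd : ∀ x y, fderiv ℝ f x y = ⟪gradient f x, y⟫ := fun x y => by simp [gradient]
  set m := ∫ v : OG n, gradient f (v.1 e) ∂orthHaar n with hm
  set V := ∫ u : OG n, ‖gradient f (u.1 e) - m‖ ^ 2 ∂orthHaar n
  have hsq := integral_inner_orth_sq hn he m
  have hmean : ‖m‖ ^ 2 = ∫ u : OG n, ⟪gradient f (u.1 e), u.1 e⟫ * ⟪m, u.1 e⟫ ∂orthHaar n := by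
    have h := inner_integral_gradient_eq hn hU hUS hf he m (hlin m)
    simp_rw [hfd] at h
    rw [← h, ← real_inner_self_eq_norm_sq]
    conv_lhs => rw [hm, ← integral_inner (integrable_of_continuous hgc)]
    simp_rw [real_inner_comm]
    rfl
  have hn2 : (2 : ℝ) ≤ n := by exact_mod_cast hn
  set t : ℝ := (n : ℝ) - 1 with ht
  have ht1 : 1 ≤ t := by linarith
  have hpt : ∀ u : OG n, 2 * t * (⟪gradient f (u.1 e), u.1 e⟫ * ⟪m, u.1 e⟫)
      ≤ ‖gradient f (u.1 e) - m‖ ^ 2 + (t ^ 2 + 2 * t) * ⟪m, u.1 e⟫ ^ 2 := by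
    intro u
    have h1 : ⟪gradient f (u.1 e), u.1 e⟫ = ⟪gradient f (u.1 e) - m, u.1 e⟫ + ⟪m, u.1 e⟫ := by
      rw [← inner_add_left, sub_add_cancel]
    have h2 : ⟪gradient f (u.1 e) - m, u.1 e⟫ ^ 2 ≤ ‖gradient f (u.1 e) - m‖ ^ 2 := by
      rw [sq_le_sq, abs_norm]
      simpa [norm_orth, he] using abs_real_inner_le_norm (gradient f (u.1 e) - m) (u.1 e)
    rw [h1]
    nlinarith [sq_nonneg (⟪gradient f (u.1 e) - m, u.1 e⟫ - t * ⟪m, u.1 e⟫)]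
  have hc0 : Continuous fun u : OG n => ‖gradient f (u.1 e) - m‖ ^ 2 :=
    (hgc.sub continuous_const).norm.pow 2
  have hc1 : Continuous fun u : OG n => ⟪gradient f (u.1 e), u.1 e⟫ * ⟪m, u.1 e⟫ :=
    (hgc.inner (by fun_prop)).mul (by fun_prop)
  have hc2 : Continuous fun u : OG n => (t ^ 2 + 2 * t) * ⟪m, u.1 e⟫ ^ 2 := by fun_prop
  have hI := integral_mono ((integrable_of_continuous hc1).const_mul (2 * t))
    ((integrable_of_continuous hc0).add (integrable_of_continuous hc2)) hpt
  simp only [Pi.add_apply] at hI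
  rw [integral_const_mul, ← hmean,
    integral_add (integrable_of_continuous hc0) (integrable_of_continuous hc2),
    integral_const_mul] at hI
  have hn0 : (n : ℝ) = t + 1 := by rw [ht]; ring
  rw [hn0] at hsq ⊢
  have h3 := mul_le_mul_of_nonneg_left hI (by linarith : 0 ≤ t + 1)
  nlinarith

lemma combine_bounds {t V H M : ℝ} (ht : 1 ≤ t) (hH : 0 ≤ H)
    (hV : t * V ≤ Real.pi ^ 2 / 6 * H) (hM : t ^ 2 * M ≤ (t + 1) * V) :
    V + M ≤ ((1 + (1 + 1 / Real.sqrt t) ^ 2) / t) * H ∧ V + M ≤ (5 / t) * H := by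
  have ht0 : 0 < t := by linarith
  have hpi : Real.pi ^ 2 / 6 ≤ 5 / 3 := by nlinarith [Real.pi_pos, Real.pi_lt_d4]
  have hs1 : 1 ≤ √t := Real.one_le_sqrt.mpr ht
  have hs : 1 / √t ≤ 1 := (div_le_one (by linarith)).mpr hs1
  have hs' : 1 / t ≤ 1 / √t :=
    one_div_le_one_div_of_le (by linarith) (by nlinarith [Real.sq_sqrt ht0.le])
  set r := 1 / √t
  have hr : 2 + 3 / t ≤ 1 + (1 + r) ^ 2 := by
    have hr2 : r ^ 2 = 1 / t := by simp [r, Real.sq_sqrt ht0.le]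
    have : 3 / t = 3 * (1 / t) := by ring
    nlinarith
  have h5 : 1 + (1 + r) ^ 2 ≤ 5 := by
    have : 0 ≤ r := by positivity
    nlinarith
  have key : V + M ≤ ((2 + 3 / t) / t) * H := by
    have h1 : t * V ≤ 5 / 3 * H := hV.trans (mul_le_mul_of_nonneg_right hpi hH)
    have h2 : t ^ 3 * (V + M) ≤ (2 * t ^ 2 + 3 * t) * H := by
      have h3 := mul_le_mul_of_nonneg_left h1 (by positivity : 0 ≤ t ^ 2 + t + 1)
      have h4 := mul_le_mul_of_nonneg_left hM ht0.le
      have h5 : 5 / 3 * (t ^ 2 + t + 1) ≤ 2 * t ^ 2 + 3 * t := by nlinarith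
      have h6 := mul_le_mul_of_nonneg_right h5 hH
      linarith
    rw [show (2 + 3 / t) / t * H = (2 * t ^ 2 + 3 * t) * H / t ^ 3 by field_simp,
      le_div_iff₀ (by positivity)]
    linarith
  have h1 : V + M ≤ ((1 + (1 + r) ^ 2) / t) * H := key.trans (by gcongr)
  exact ⟨h1, h1.trans (by gcongr)⟩

/-- **Proposition 6.1 (Statement 16).** Bound on the L²-norm of the Euclidean gradient. -/
theorem gradient_int_le_euclidean_hess_int
    {n : ℕ} (hn : 2 ≤ n) (f : E n → ℝ) (U : Set (E n)) (hU : IsOpen U)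
    (hUS : Metric.sphere (0 : E n) 1 ⊆ U) (hf : ContDiffOn ℝ 2 f U)
    (hlin : ∀ v : E n, ∫ θ, ⟪v, θ⟫ * f θ ∂sphMeasure n = 0) :
    (∫ θ, ‖gradient f θ‖ ^ 2 ∂sphMeasure n ≤
      ((1 + (1 + 1 / Real.sqrt ((n : ℝ) - 1)) ^ 2) / ((n : ℝ) - 1)) *
        ∫ θ, hsNormSq (hess f θ) ∂sphMeasure n) ∧
    (∫ θ, ‖gradient f θ‖ ^ 2 ∂sphMeasure n ≤
      (5 / ((n : ℝ) - 1)) * ∫ θ, hsNormSq (hess f θ) ∂sphMeasure n) := by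
  have hf1 : ContDiffOn ℝ 1 f U := hf.of_le (by norm_num)
  have hg : ContDiffOn ℝ 1 (gradient f) U :=
    (InnerProductSpace.toDual ℝ (E n)).symm.contDiff.comp_contDiffOn
      (hf.fderiv_of_isOpen hU (by norm_num))
  obtain ⟨e, he⟩ : ∃ e : E n, ‖e‖ = 1 := ⟨EuclideanSpace.single ⟨0, by omega⟩ 1, by simp⟩
  have hgs : ContinuousOn (gradient f) (sphere (0 : E n) 1) := hg.continuousOn.mono hUS
  have hhs : ContinuousOn (hess f) (sphere (0 : E n) 1) :=
    (hg.continuousOn_fderiv_of_isOpen hU le_rfl).mono hUS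
  have hhsn : ContinuousOn (fun θ => hsNormSq (hess f θ)) (sphere (0 : E n) 1) :=
    continuousOn_finsetSum _ fun i _ => (hhs.clm_apply continuousOn_const).norm.pow 2
  have hfs : ContinuousOn f (sphere (0 : E n) 1) := hf.continuousOn.mono hUS
  have hlin' : ∀ v, ∫ u : OG n, ⟪v, u.1 e⟫ * f (u.1 e) ∂orthHaar n = 0 := fun v => by
    rw [← hlin v, integral_sphMeasure_eq hn he]
    exact ContinuousOn.mul (by fun_prop) hfs
  have hgn : ContinuousOn (fun θ => ‖gradient f θ‖ ^ 2) (sphere (0 : E n) 1) := hgs.norm.pow 2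
  rw [integral_sphMeasure_eq hn he hgn, integral_sphMeasure_eq hn he hhsn]
  have hmean := norm_integral_gradient_sq_le hn hU hUS hf1 he hlin'
  have hvar := integral_sq_sub_mean_le hn hU hUS hg he
  change _ ≤ _ * ∫ u : OG n, hsNormSq (hess f (u.1 e)) ∂orthHaar n at hvar
  have hgc := continuous_comp_orth hgs he
  set m := ∫ v : OG n, gradient f (v.1 e) ∂orthHaar n with hm
  set V := ∫ u : OG n, ‖gradient f (u.1 e) - m‖ ^ 2 ∂orthHaar n
  set H := ∫ u : OG n, hsNormSq (hess f (u.1 e)) ∂orthHaar n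
  have hH0 : 0 ≤ H := integral_nonneg fun _ => Finset.sum_nonneg fun _ _ => sq_nonneg _
  have hsplit : ∫ u : OG n, ‖gradient f (u.1 e)‖ ^ 2 ∂orthHaar n = V + ‖m‖ ^ 2 := by
    simpa using integral_norm_sub_sq_eq hgc 0
  have hn2 : (2 : ℝ) ≤ n := by exact_mod_cast hn
  rw [hsplit]
  exact combine_bounds (by linarith : (1 : ℝ) ≤ n - 1) hH0 hvar (by simpa using hmean)

end SecondOrderConc
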